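/- arXiv:0810.1779 — 5 statements merged into one kernel-verified Lean document; each statement's English description precedes it below -/
import Mathlib

section
/- Let K ⊆ ℝⁿ be an open convex symmetric cone containing K_n^+, and let f : K → ℝ be C¹ with ∂f/∂λ_i > 0 on K for every i and f(1,…,1) = 1. Let Ω ⊆ ℝⁿ be a bounded domain and σ > 0 a constant. Suppose u ∈ C²(Ω) ∩ C⁰(Ω̄) satisfies u > 0 in Ω, u = 0 on ∂Ω, and for all x ∈ Ω the hyperbolic principal curvature vector κ[u](x) lies in K and f(κ[u](x)) = σ. Then σ < 1. -/
open scoped BigOperators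
open Set

noncomputable section

abbrev Euc (n : ℕ) := EuclideanSpace ℝ (Fin n)

/-- First partial derivative (within a set `s`). -/
def pd1 {n : ℕ} (s : Set (Euc n)) (u : Euc n → ℝ) (x : Euc n) (i : Fin n) : ℝ :=
  fderivWithin ℝ u s x (EuclideanSpace.single i 1)

/-- Second partial derivative (within a set `s`). -/
def pd2 {n : ℕ} (s : Set (Euc n)) (u : Euc n → ℝ) (x : Euc n) (i j : Fin n) : ℝ :=
  fderivWithin ℝ (fun y => pd1 s u y i) s x (EuclideanSpace.single j 1)

/-- w = √(1+|Du|²). -/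
def wgt {n : ℕ} (s : Set (Euc n)) (u : Euc n → ℝ) (x : Euc n) : ℝ :=
  Real.sqrt (1 + ∑ i, (pd1 s u x i) ^ 2)

/-- γ^{ij} = δ_{ij} − u_i u_j/(w(1+w)). -/
def gmat {n : ℕ} (s : Set (Euc n)) (u : Euc n → ℝ) (x : Euc n) : Matrix (Fin n) (Fin n) ℝ :=
  Matrix.of fun i j =>
    (if i = j then (1:ℝ) else 0) - pd1 s u x i * pd1 s u x j / (wgt s u x * (1 + wgt s u x))

/-- The matrix A[u](x) whose eigenvalues are the hyperbolic principal curvatures. -/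
def hypA {n : ℕ} (s : Set (Euc n)) (u : Euc n → ℝ) (x : Euc n) : Matrix (Fin n) (Fin n) ℝ :=
  Matrix.of fun i j =>
    (1 / wgt s u x) * ((if i = j then (1:ℝ) else 0)
      + u x * ∑ k, ∑ l, gmat s u x i k * pd2 s u x k l * gmat s u x l j)

/-- κ is the list of eigenvalues of A, counted with multiplicity. -/
def IsEigenvalues {n : ℕ} (A : Matrix (Fin n) (Fin n) ℝ) (κ : Fin n → ℝ) : Prop :=
  A.charpoly = ∏ i, (Polynomial.X - Polynomial.C (κ i))

/-- The largest eigenvalue of a matrix. -/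
def maxEigen {n : ℕ} (A : Matrix (Fin n) (Fin n) ℝ) : ℝ :=
  sSup {t : ℝ | A.charpoly.IsRoot t}

/-- u is admissible on Ω: u > 0 and δ_{ij} + u_i u_j + u u_{ij} is positive definite. -/
def Admissible {n : ℕ} (s Ω : Set (Euc n)) (u : Euc n → ℝ) : Prop :=
  ∀ x ∈ Ω, 0 < u x ∧
    (Matrix.of fun i j =>
      (if i = j then (1:ℝ) else 0) + pd1 s u x i * pd1 s u x j + u x * pd2 s u x i j).PosDef

/-- |D²u| : largest absolute value of a second partial derivative. -/
def hessAbs {n : ℕ} (s : Set (Euc n)) (u : Euc n → ℝ) (x : Euc n) : ℝ :=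
  ⨆ i : Fin n, ⨆ j : Fin n, |pd2 s u x i j|

/-- The positive cone K_n^+. -/
def Kpos (n : ℕ) : Set (Fin n → ℝ) := {p | ∀ i, 0 < p i}

/-- An open convex symmetric cone containing K_n^+. -/
def IsSymmCone {n : ℕ} (K : Set (Fin n → ℝ)) : Prop :=
  IsOpen K ∧ Convex ℝ K ∧ (∀ p ∈ K, ∀ t : ℝ, 0 < t → t • p ∈ K) ∧
    (∀ p ∈ K, ∀ g : Equiv.Perm (Fin n), (p ∘ g) ∈ K) ∧ Kpos n ⊆ K

/-- The structure conditions on the curvature function f (with K = K_n^+). -/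
def StructureConds (n : ℕ) (f : (Fin n → ℝ) → ℝ) : Prop :=
  ContDiffOn ℝ (⊤ : ℕ∞) f (Kpos n) ∧
  (∀ p ∈ Kpos n, ∀ g : Equiv.Perm (Fin n), f (p ∘ g) = f p) ∧
  (∀ p ∈ Kpos n, ∀ i, 0 < fderiv ℝ f p (Pi.single i 1)) ∧
  ConcaveOn ℝ (Kpos n) f ∧
  (∀ p ∈ Kpos n, 0 < f p) ∧
  (∃ F : (Fin n → ℝ) → ℝ, ContinuousOn F (closure (Kpos n)) ∧
    (∀ p ∈ Kpos n, F p = f p) ∧ ∀ p ∈ frontier (Kpos n), F p = 0) ∧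
  f (fun _ => 1) = 1 ∧
  (∀ t : ℝ, 0 < t → ∀ p ∈ Kpos n, f (t • p) = t * f p)

/-- Condition (1.10). -/
def Cond110 (n : ℕ) (f : (Fin n → ℝ) → ℝ) : Prop :=
  ∃ ε₀ > (0:ℝ), ∃ δ₀ > (0:ℝ), ∃ R₀ > (0:ℝ), ∀ R ≥ R₀, ∀ p : Fin n → ℝ,
    Real.sqrt (∑ i, (p i - 1) ^ 2) < δ₀ →
    ∀ i : Fin n, 1 + ε₀ ≤ f (Function.update p i (p i + R))

/-- A bounded domain whose boundary is a C^k hypersurface, given as a regular level set. -/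
def HasCkBoundary {n : ℕ} (Ω : Set (Euc n)) (k : ℕ∞) : Prop :=
  ∃ ρ : Euc n → ℝ, ContDiff ℝ k ρ ∧ Ω = {x | ρ x < 0} ∧
    frontier Ω = {x | ρ x = 0} ∧ ∀ x ∈ frontier Ω, fderiv ℝ ρ x ≠ 0

end

/-! At an interior maximum of `u` the gradient vanishes and `A[u] = 1 + u D²u ≤ 1`, so `κᵢ ≤ 1`
for all `i` and monotonicity of `f` gives `σ ≤ f (1, …, 1)`. For a strict inequality, maximise
`u + ε |x|²` instead, with `ε > 0` so small that the maximum is still interior. There `D²u` is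
negative definite, and although the gradient need not vanish,
`1 - A[u] = (1 - 1/w) 1 + (u/w) γ (-D²u) γ` is positive definite because `w ≥ 1` and `γ` is
invertible, with determinant `1/w`. Hence `κᵢ < 1` for all `i`. -/

open Filter Matrix Topology

theorem strictMonoOn_of_hasFDerivWithinAt_single_pos {ι : Type*} [Finite ι] [DecidableEq ι]
    {K : Set (ι → ℝ)} (hK : Convex ℝ K) {f : (ι → ℝ) → ℝ} {f' : (ι → ℝ) → (ι → ℝ) →L[ℝ] ℝ}
    (hf : ∀ p ∈ K, HasFDerivWithinAt f (f' p) K p)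
    (hf' : ∀ p ∈ K, ∀ i, 0 < f' p (Pi.single i 1)) : StrictMonoOn f K := by
  have := Fintype.ofFinite ι
  intro a ha b hb hab
  obtain ⟨hle, k, hk⟩ := Pi.lt_def.1 hab
  let γ : ℝ → ι → ℝ := AffineMap.lineMap a b
  have hγ : MapsTo γ (Icc 0 1) K := fun t ht => hK.lineMap_mem ha hb ht
  have hderiv : ∀ t ∈ Icc (0 : ℝ) 1,
      HasDerivWithinAt (f ∘ γ) (f' (γ t) (b - a)) (Icc 0 1) t := fun t ht =>
    (hf _ (hγ ht)).comp_hasDerivWithinAt t AffineMap.hasDerivWithinAt_lineMap hγ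
  have hpos : ∀ p ∈ K, 0 < f' p (b - a) := by
    intro p hp
    have hsum : f' p (b - a) = ∑ i, (b i - a i) * f' p (Pi.single i 1) := by
      simpa using congrArg (f' p) ((Pi.basisFun ℝ ι).sum_repr (b - a)).symm
    rw [hsum]
    refine Finset.sum_pos' (fun i _ => ?_) ⟨k, Finset.mem_univ k, ?_⟩
    · exact mul_nonneg (sub_nonneg.2 (hle i)) (hf' p hp i).le
    · exact mul_pos (sub_pos.2 hk) (hf' p hp k)
  have hmono : StrictMonoOn (f ∘ γ) (Icc 0 1) :=
    strictMonoOn_of_hasDerivWithinAt_pos (convex_Icc 0 1)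
      (fun t ht => (hderiv t ht).continuousWithinAt)
      (fun t ht => (hderiv t (interior_subset ht)).mono interior_subset)
      (fun t ht => hpos _ (hγ (interior_subset ht)))
  simpa [γ] using hmono (left_mem_Icc.2 zero_le_one) (right_mem_Icc.2 zero_le_one) zero_lt_one

theorem deriv_deriv_nonpos_of_isLocalMax {f : ℝ → ℝ} {a : ℝ} (hf : ContinuousAt f a)
    (hmax : IsLocalMax f a) : deriv (deriv f) a ≤ 0 := by
  by_contra! hpos
  have hmin : IsLocalMin f a := isLocalMin_of_deriv_deriv_pos hpos hmax.deriv_eq_zero hf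
  have hconst : f =ᶠ[𝓝 a] fun _ => f a := by
    filter_upwards [hmax, hmin] with t hle hge using le_antisymm hle hge
  simp [hconst.deriv.deriv_eq] at hpos

theorem fderiv_fderiv_apply_self_nonpos_of_isLocalMax {E : Type*} [NormedAddCommGroup E]
    [NormedSpace ℝ E] {f : E → ℝ} {x : E} (hf : ContDiffAt ℝ 2 f x) (hmax : IsLocalMax f x)
    (y : E) : fderiv ℝ (fderiv ℝ f) x y y ≤ 0 := by
  let γ : ℝ → E := fun t => x + t • y
  have hγ (t : ℝ) : HasDerivAt γ y t := by
    simpa [γ] using ((hasDerivAt_id t).smul_const y).const_add x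
  have hγ0 : γ 0 = x := by simp [γ]
  have hlim : Tendsto γ (𝓝 0) (𝓝 x) := hγ0 ▸ (hγ 0).continuousAt.tendsto
  have hderiv : deriv (f ∘ γ) =ᶠ[𝓝 0] fun t => fderiv ℝ f (γ t) y := by
    filter_upwards [hlim.eventually (hf.eventually (by simp))] with t ht
    exact ((ht.differentiableAt two_ne_zero).hasFDerivAt.comp_hasDerivAt t (hγ t)).deriv
  have hdiff : DifferentiableAt ℝ (fderiv ℝ f) (γ 0) :=
    hγ0 ▸ (hf.fderiv_right (m := 1) le_rfl).differentiableAt one_ne_zero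
  have hderiv2 : deriv (deriv (f ∘ γ)) 0 = fderiv ℝ (fderiv ℝ f) x y y := by
    rw [hderiv.deriv_eq, ← hγ0]
    simpa using ((hdiff.hasFDerivAt.comp_hasDerivAt 0 (hγ 0)).clm_apply
      (hasDerivAt_const 0 y)).deriv
  rw [← hderiv2]
  refine deriv_deriv_nonpos_of_isLocalMax ?_ (hγ0 ▸ hmax |>.comp_continuous (hγ 0).continuousAt)
  exact (hγ0 ▸ hf.continuousAt : ContinuousAt f (γ 0)).comp (hγ 0).continuousAt

theorem fderiv_fderiv_apply_self_le_of_isLocalMax_add_norm_sq {E : Type*} [NormedAddCommGroup E]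
    [InnerProductSpace ℝ E] {u : E → ℝ} {x : E} {ε : ℝ} (hu : ContDiffAt ℝ 2 u x)
    (hmax : IsLocalMax (fun z => u z + ε * ‖z‖ ^ 2) x) (y : E) :
    fderiv ℝ (fderiv ℝ u) x y y ≤ -(2 * ε * ‖y‖ ^ 2) := by
  -- The type of `innerSL ℝ` says conjugate-linear, which over `ℝ` is linear by unfolding only.
  let B : E →L[ℝ] E →L[ℝ] ℝ := innerSL ℝ
  have hderiv : fderiv ℝ (fun z => u z + ε * ‖z‖ ^ 2) =ᶠ[𝓝 x]
      fun z => fderiv ℝ u z + ε • 2 • B z := by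
    filter_upwards [hu.eventually (by simp)] with z hz
    exact ((hz.differentiableAt two_ne_zero).hasFDerivAt.add
      ((hasStrictFDerivAt_norm_sq z).hasFDerivAt.const_mul ε)).fderiv
  have hderiv2 : HasFDerivAt (fun z => fderiv ℝ u z + ε • 2 • B z)
      (fderiv ℝ (fderiv ℝ u) x + ε • 2 • B) x :=
    ((hu.fderiv_right (m := 1) le_rfl).differentiableAt one_ne_zero).hasFDerivAt.add
      (ε • 2 • B).hasFDerivAt
  have hle := fderiv_fderiv_apply_self_nonpos_of_isLocalMax
    (hu.add (contDiffAt_const.mul (contDiff_norm_sq ℝ).contDiffAt)) hmax y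
  have hB : B y y = ‖y‖ ^ 2 := real_inner_self_eq_norm_sq y
  simp only [hderiv.fderiv_eq, hderiv2.fderiv, _root_.add_apply, _root_.smul_apply, hB,
    smul_eq_mul, nsmul_eq_mul, Nat.cast_ofNat] at hle
  linarith

theorem exists_isLocalMax_add_mul {X : Type*} [TopologicalSpace X] {Ω : Set X} (hΩ : IsOpen Ω)
    (hcpt : IsCompact (closure Ω)) {u q : X → ℝ} (hu : ContinuousOn u (closure Ω))
    (hq : ContinuousOn q (closure Ω)) {c : ℝ} (hfr : ∀ x ∈ frontier Ω, u x ≤ c) {p : X}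
    (hp : p ∈ Ω) (hup : c < u p) :
    ∃ ε > 0, ∃ x ∈ Ω, IsLocalMax (fun z => u z + ε * q z) x := by
  obtain ⟨C, hC⟩ := hcpt.exists_bound_of_continuousOn hq
  have hqp := abs_le.1 (hC p (subset_closure hp))
  have hC0 : 0 < 2 * C + 1 := by linarith
  obtain ⟨ε, hε⟩ : ∃ ε, ε * (2 * C + 1) = u p - c := ⟨_, div_mul_cancel₀ _ hC0.ne'⟩
  have hε0 : 0 < ε := pos_of_mul_pos_left (hε ▸ sub_pos.2 hup) hC0.le
  refine ⟨ε, hε0, hcpt.exists_isLocalMax_mem_open subset_closure (hu.add (hq.const_mul ε))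
    (subset_closure hp) (fun z hz => ?_) hΩ⟩
  have huz : u z ≤ c := hfr z (hΩ.frontier_eq ▸ hz)
  have hqz := abs_le.1 (hC z hz.1)
  have hperturb : ε * (q z - q p) ≤ ε * (2 * C) := by gcongr; linarith
  linarith

theorem lt_of_isRoot_charpoly_of_posDef_smul_one_sub {ι : Type*} [Fintype ι] [DecidableEq ι]
    {A : Matrix ι ι ℝ} {c μ : ℝ} (hA : (c • 1 - A).PosDef) (hμ : A.charpoly.IsRoot μ) :
    μ < c := by
  have hmem : c - μ ∈ spectrum ℝ (c • 1 - A) := by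
    rw [← Algebra.algebraMap_eq_smul_one, ← spectrum.singleton_sub_eq]
    exact Set.sub_mem_sub rfl (mem_spectrum_iff_isRoot_charpoly.2 hμ)
  rw [hA.isHermitian.spectrum_real_eq_range_eigenvalues] at hmem
  obtain ⟨i, hi⟩ := hmem
  exact sub_pos.1 (hi ▸ hA.eigenvalues_pos i)

theorem det_one_sub_smul_vecMulVec {ι R : Type*} [Fintype ι] [DecidableEq ι] [CommRing R]
    (a : R) (p q : ι → R) : (1 - a • vecMulVec p q).det = 1 - a * (q ⬝ᵥ p) := by
  rw [← smul_vecMulVec, vecMulVec_eq Unit, det_one_sub_mul_comm, det_unique]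
  simp [replicateRow_mul_replicateCol_apply]

section Graph

variable {n : ℕ} {s : Set (Euc n)} {u : Euc n → ℝ} {x : Euc n}

theorem one_le_wgt : 1 ≤ wgt s u x :=
  Real.one_le_sqrt.2 (le_add_of_nonneg_right (Finset.sum_nonneg fun _ _ => sq_nonneg _))

theorem wgt_sq : wgt s u x ^ 2 = 1 + pd1 s u x ⬝ᵥ pd1 s u x := by
  rw [wgt, Real.sq_sqrt (add_nonneg zero_le_one (Finset.sum_nonneg fun _ _ => sq_nonneg _))]
  simp only [dotProduct, sq]

theorem gmat_eq : gmat s u x =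
    1 - (wgt s u x * (1 + wgt s u x))⁻¹ • vecMulVec (pd1 s u x) (pd1 s u x) := by
  ext i j
  simp [gmat, one_apply, vecMulVec_apply, div_eq_inv_mul]

theorem det_gmat : (gmat s u x).det = (wgt s u x)⁻¹ := by
  have hw := one_le_wgt (s := s) (u := u) (x := x)
  rw [gmat_eq, det_one_sub_smul_vecMulVec, eq_sub_of_add_eq' wgt_sq.symm]
  field_simp
  ring

theorem isHermitian_gmat : (gmat s u x).IsHermitian := by
  ext i j
  simp [gmat, eq_comm, mul_comm]

theorem hypA_eq : hypA s u x =
    (wgt s u x)⁻¹ • (1 + u x • (gmat s u x * of (pd2 s u x) * gmat s u x)) := by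
  ext i j
  simp only [hypA, of_apply, Matrix.smul_apply, Matrix.add_apply, smul_eq_mul, one_apply,
    mul_apply, Finset.sum_mul, one_div]
  rw [Finset.sum_comm]

theorem posDef_one_sub_hypA (hu : 0 < u x) (hH : (-of (pd2 s u x)).PosDef) :
    (1 - hypA s u x).PosDef := by
  have hw := one_le_wgt (s := s) (u := u) (x := x)
  have hw0 : 0 < wgt s u x := by linarith
  have hγ : IsUnit (gmat s u x) := by
    rw [isUnit_iff_isUnit_det, det_gmat]
    exact (inv_pos.2 hw0).ne'.isUnit
  have hconj : (gmat s u x * -of (pd2 s u x) * gmat s u x).PosDef := by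
    simpa only [star_eq_conjTranspose, isHermitian_gmat.eq] using
      hγ.posDef_star_right_conjugate_iff.2 hH
  have hsplit : 1 - hypA s u x = (1 - (wgt s u x)⁻¹) • (1 : Matrix (Fin n) (Fin n) ℝ) +
      ((wgt s u x)⁻¹ * u x) • (gmat s u x * -of (pd2 s u x) * gmat s u x) := by
    rw [hypA_eq, mul_neg, neg_mul]
    module
  rw [hsplit]
  exact (hconj.smul (by positivity)).posSemidef_add
    (PosSemidef.one.smul (sub_nonneg.2 (inv_le_one_of_one_le₀ hw)))

theorem pd2_eq_fderiv_fderiv (hs : IsOpen s) (hu : ContDiffOn ℝ 2 u s) (hx : x ∈ s)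
    (i j : Fin n) : pd2 s u x i j =
      fderiv ℝ (fderiv ℝ u) x (EuclideanSpace.single j 1) (EuclideanSpace.single i 1) := by
  have hdiff : DifferentiableAt ℝ (fderiv ℝ u) x :=
    ((hu.contDiffAt (hs.mem_nhds hx)).fderiv_right (m := 1) le_rfl).differentiableAt one_ne_zero
  have hpd1 : (fun y => pd1 s u y i) =ᶠ[𝓝 x] fun y => fderiv ℝ u y (EuclideanSpace.single i 1) := by
    filter_upwards [hs.mem_nhds hx] with y hy
    rw [pd1, fderivWithin_of_isOpen hs hy]
  rw [pd2, fderivWithin_of_isOpen hs hx, hpd1.fderiv_eq,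
    fderiv_clm_apply hdiff (differentiableAt_const _)]
  simp

theorem dotProduct_pd2_mulVec (hs : IsOpen s) (hu : ContDiffOn ℝ 2 u s) (hx : x ∈ s)
    (v : Fin n → ℝ) : v ⬝ᵥ of (pd2 s u x) *ᵥ v =
      fderiv ℝ (fderiv ℝ u) x (WithLp.toLp 2 v) (WithLp.toLp 2 v) := by
  have hv : WithLp.toLp 2 v = ∑ i, v i • EuclideanSpace.single i (1 : ℝ) := by
    simpa using ((EuclideanSpace.basisFun (Fin n) ℝ).sum_repr (WithLp.toLp 2 v)).symm
  simp only [hv, map_sum, map_smul, _root_.sum_apply, _root_.smul_apply, smul_eq_mul, dotProduct,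
    mulVec, of_apply, pd2_eq_fderiv_fderiv hs hu hx, mul_comm (v _)]

theorem isHermitian_pd2 (hs : IsOpen s) (hu : ContDiffOn ℝ 2 u s) (hx : x ∈ s) :
    (of (pd2 s u x)).IsHermitian := by
  have hsymm : IsSymmSndFDerivAt ℝ u x :=
    (hu.contDiffAt (hs.mem_nhds hx)).isSymmSndFDerivAt (by simp)
  ext i j
  simp only [conjTranspose_apply, of_apply, star_trivial, pd2_eq_fderiv_fderiv hs hu hx]
  exact hsymm _ _

theorem posDef_neg_pd2_of_isLocalMax_add_norm_sq (hs : IsOpen s) (hu : ContDiffOn ℝ 2 u s)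
    (hx : x ∈ s) {ε : ℝ} (hε : 0 < ε) (hmax : IsLocalMax (fun z => u z + ε * ‖z‖ ^ 2) x) :
    (-of (pd2 s u x)).PosDef := by
  refine .of_dotProduct_mulVec_pos (isHermitian_pd2 hs hu hx).neg fun v hv => ?_
  have hle := fderiv_fderiv_apply_self_le_of_isLocalMax_add_norm_sq
    (hu.contDiffAt (hs.mem_nhds hx)) hmax (WithLp.toLp 2 v)
  have hnorm : 0 < ‖WithLp.toLp 2 v‖ := by simpa using hv
  rw [star_trivial, neg_mulVec, dotProduct_neg, dotProduct_pd2_mulVec hs hu hx]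
  have hpos : 0 < 2 * ε * ‖WithLp.toLp 2 v‖ ^ 2 := by positivity
  linarith

theorem IsEigenvalues.isRoot_charpoly {A : Matrix (Fin n) (Fin n) ℝ} {κ : Fin n → ℝ}
    (h : IsEigenvalues A κ) (i : Fin n) : A.charpoly.IsRoot (κ i) := by
  rw [h, Polynomial.isRoot_prod]
  exact ⟨i, Finset.mem_univ i, by simp⟩

theorem exists_eigenvalues_hypA_lt_one (hs : IsOpen s) (hne : s.Nonempty)
    (hb : Bornology.IsBounded s) (hu2 : ContDiffOn ℝ 2 u s) (hu0 : ContinuousOn u (closure s))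
    (hupos : ∀ x ∈ s, 0 < u x) (hubd : ∀ x ∈ frontier s, u x = 0) :
    ∃ x ∈ s, ∀ κ, IsEigenvalues (hypA s u x) κ → ∀ i, κ i < 1 := by
  obtain ⟨p, hp⟩ := hne
  obtain ⟨ε, hε, x, hx, hmax⟩ := exists_isLocalMax_add_mul hs hb.isCompact_closure hu0
    (q := fun z => ‖z‖ ^ 2) (by fun_prop) (fun z hz => (hubd z hz).le) hp (hupos p hp)
  have hA : (1 - hypA s u x).PosDef := posDef_one_sub_hypA (hupos x hx)
    (posDef_neg_pd2_of_isLocalMax_add_norm_sq hs hu2 hx hε hmax)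
  exact ⟨x, hx, fun κ hκ i => lt_of_isRoot_charpoly_of_posDef_smul_one_sub
    (by rwa [one_smul]) (hκ.isRoot_charpoly i)⟩

end Graph

theorem stmt_8_general {n : ℕ} (hn : n ≠ 0) {K : Set (Fin n → ℝ)} (hK : 1 ∈ K)
    {f : (Fin n → ℝ) → ℝ} (hf : StrictMonoOn f K)
    {Ω : Set (Euc n)} (hΩo : IsOpen Ω) (hΩne : Ω.Nonempty) (hΩb : Bornology.IsBounded Ω)
    {σ : ℝ} {u : Euc n → ℝ} (hu2 : ContDiffOn ℝ 2 u Ω) (hu0 : ContinuousOn u (closure Ω))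
    (hupos : ∀ x ∈ Ω, 0 < u x) (hubd : ∀ x ∈ frontier Ω, u x = 0)
    (heq : ∀ x ∈ Ω, ∃ κ : Fin n → ℝ, IsEigenvalues (hypA Ω u x) κ ∧ κ ∈ K ∧ σ ≤ f κ) :
    σ < f 1 := by
  obtain ⟨x, hx, hlt⟩ := exists_eigenvalues_hypA_lt_one hΩo hΩne hΩb hu2 hu0 hupos hubd
  obtain ⟨κ, hκ, hκK, hσκ⟩ := heq x hx
  have : Nonempty (Fin n) := Fin.pos_iff_nonempty.1 (Nat.pos_of_ne_zero hn)
  exact hσκ.trans_lt (hf hκK hK (lt_of_strongLT (hlt κ hκ)))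

/-- Necessity of σ < 1 (Lemma 3.2 of the paper). -/
theorem stmt_8 {n : ℕ} (hn : 2 ≤ n) (K : Set (Fin n → ℝ)) (hK : IsSymmCone K)
    (f : (Fin n → ℝ) → ℝ) (hf1 : ContDiffOn ℝ 1 f K)
    (hfm : ∀ p ∈ K, ∀ i, 0 < fderiv ℝ f p (Pi.single i 1))
    (hfn : f (fun _ => 1) = 1)
    (Ω : Set (Euc n)) (hΩo : IsOpen Ω) (hΩc : IsConnected Ω) (hΩb : Bornology.IsBounded Ω)
    (σ : ℝ) (hσ : 0 < σ)
    (u : Euc n → ℝ) (hu2 : ContDiffOn ℝ 2 u Ω) (hu0 : ContinuousOn u (closure Ω))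
    (hupos : ∀ x ∈ Ω, 0 < u x) (hubd : ∀ x ∈ frontier Ω, u x = 0)
    (heq : ∀ x ∈ Ω, ∃ κ : Fin n → ℝ, IsEigenvalues (hypA Ω u x) κ ∧ κ ∈ K ∧ f κ = σ) :
    σ < 1 := by
  obtain ⟨hKo, hKc, -, -, hKpos⟩ := hK
  have hf : StrictMonoOn f K := strictMonoOn_of_hasFDerivWithinAt_single_pos hKc
    (fun p hp => ((hf1.differentiableOn one_ne_zero).differentiableAt
      (hKo.mem_nhds hp)).hasFDerivAt.hasFDerivWithinAt) hfm
  exact hfn ▸ stmt_8_general (by lia) (hKpos fun _ => one_pos) hf hΩo hΩc.nonempty hΩb hu2 hu0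
    hupos hubd fun x hx => (heq x hx).imp fun _ ⟨hκ, hκK, hfκ⟩ => ⟨hκ, hκK, hfκ.ge⟩
end

section
/- Let Ω ⊆ ℝⁿ be open, u ∈ C³(Ω), and ψ ∈ C¹(Ω × ℝ). Let G = G(r,p,z) be a real-valued C¹ function defined on an open subset of Symₙ(ℝ) × ℝⁿ × ℝ that contains {(D²u(x), Du(x), u(x)) : x ∈ Ω}, and suppose G is orthogonally invariant: G(OᵀrO, Oᵀp, z) = G(r,p,z) for every orthogonal n×n matrix O and every (r,p,z) in the domain. Assume G(D²u(x), Du(x), u(x)) = ψ(x, u(x)) for all x ∈ Ω. Write G^{st} = ∂G/∂r_{st}, G^{s} = ∂G/∂p_s and G_u = ∂G/∂z, all evaluated at (D²u(x), Du(x), u(x)), and for v ∈ C²(Ω) set Lv = Σ_{s,t} G^{st} v_{st} + Σ_s G^{s} v_s. Then for all indices 1 ≤ i, j ≤ n and every x ∈ Ω: L(x_i u_j − x_j u_i) = (ψ_z(x,u(x)) − G_u)·(x_i u_j − x_j u_i) + x_i ψ_{x_j}(x,u(x)) − x_j ψ_{x_i}(x,u(x)), where u_i, u_j denote first partial derivatives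 of u and ψ_z, ψ_{x_i} the partial derivatives of ψ. -/
open scoped BigOperators
open Set

open scoped Matrix

/-- The point (D²u(x), Du(x), u(x)) at which the nonlinear operator G is evaluated. -/
noncomputable def qpt {n : ℕ} (s : Set (Euc n)) (u : Euc n → ℝ) (x : Euc n) :
    (Fin n → Fin n → ℝ) × (Fin n → ℝ) × ℝ :=
  ((fun i j => pd2 s u x i j), (fun i => pd1 s u x i), u x)

/-!
For a linear vector field `X(y) = By`, the jet of `Xu` is the derivative along `X` of the jet of `u`
plus the infinitesimal action of `B` on the jet of `u`. If `B` is skew-symmetric, the matrices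
`exp (τB)` are orthogonal, so that the derivative of an orthogonally invariant `G` vanishes in the
direction of this action. Hence `dG` applied to the jet of `Xu` equals the derivative along `X` of
`G(D²u, Du, u) = ψ(·, u)`. For the field `X = x_i ∂_j − x_j ∂_i` the left-hand side is
`L(Xu) + G_u Xu` and the right-hand side is `(X ψ(·, z))|_{z = u} + ψ_z Xu`.
-/

section Jets

/-- The space of 2-jets `(D²u, Du, u)` of real functions of the variables `ι`, in the unsymmetrized
form in which `qpt` takes its values. -/
abbrev Jet2 (ι : Type*) := (ι → ι → ℝ) × (ι → ℝ) × ℝ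

variable {ι : Type*} [Fintype ι]

/-- The action `(r, p, z) ↦ (OᵀrO, Oᵀp, z)` of a linear change of variables on 2-jets: it turns
the jet of `u` at `Oy` into the jet of `u ∘ O` at `y`. -/
def Jet2.pullback (O : Matrix ι ι ℝ) (q : Jet2 ι) : Jet2 ι :=
  (fun s t => (Oᵀ * Matrix.of q.1 * O) s t, Oᵀ *ᵥ q.2.1, q.2.2)

/-- The infinitesimal action of a matrix `B` on 2-jets, the derivative at the identity of
`Jet2.pullback` in the direction `B`. -/
def Jet2.pullbackDeriv (B : Matrix ι ι ℝ) (q : Jet2 ι) : Jet2 ι :=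
  (fun s t => (Bᵀ * Matrix.of q.1 + Matrix.of q.1 * B) s t, Bᵀ *ᵥ q.2.1, 0)

variable [DecidableEq ι]

theorem Jet2.pullback_one (q : Jet2 ι) : q.pullback 1 = q := by
  simp [Jet2.pullback]

open scoped Matrix.Norms.Operator in
theorem Jet2.hasDerivAt_pullback_exp (B : Matrix ι ι ℝ) (q : Jet2 ι) :
    HasDerivAt (fun τ : ℝ => q.pullback (NormedSpace.exp (τ • B))) (q.pullbackDeriv B) 0 := by
  have hexp (C : Matrix ι ι ℝ) : HasDerivAt (fun τ : ℝ => NormedSpace.exp (τ • C)) C 0 :=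
    (hasDerivAt_exp_smul_const C (0 : ℝ)).congr_deriv (by simp)
  have hmul : HasDerivAt
      (fun τ : ℝ => NormedSpace.exp (τ • Bᵀ) * Matrix.of q.1 * NormedSpace.exp (τ • B))
      (Bᵀ * Matrix.of q.1 + Matrix.of q.1 * B) 0 :=
    (((hexp Bᵀ).mul_const (Matrix.of q.1)).mul (hexp B)).congr_deriv (by simp)
  have hvec : HasDerivAt (fun τ : ℝ => NormedSpace.exp (τ • Bᵀ) *ᵥ q.2.1) (Bᵀ *ᵥ q.2.1) 0 :=
    hasDerivAt_pi.2 fun s => HasDerivAt.fun_sum fun t _ =>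
      (hasDerivAt_pi.1 (hasDerivAt_pi.1 (hexp Bᵀ) s) t).mul_const (q.2.1 t)
  simp only [Jet2.pullback, ← Matrix.exp_transpose, Matrix.transpose_smul]
  exact hmul.prodMk (hvec.prodMk (hasDerivAt_const 0 q.2.2))

theorem exp_transpose_mul_exp_of_skew {A : Matrix ι ι ℝ} (hA : Aᵀ = -A) :
    (NormedSpace.exp A)ᵀ * NormedSpace.exp A = 1 := by
  rw [← Matrix.exp_transpose, hA, ← Matrix.exp_add_of_commute _ _ (Commute.refl A).neg_left]
  simp

theorem fderiv_pullbackDeriv_eq_zero {F : Type*} [NormedAddCommGroup F] [NormedSpace ℝ F]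
    {G : Jet2 ι → F} {q : Jet2 ι}
    (hG : DifferentiableAt ℝ G q)
    (hinv : ∀ O : Matrix ι ι ℝ, Oᵀ * O = 1 → G (q.pullback O) = G q)
    {A : Matrix ι ι ℝ} (hA : Aᵀ = -A) : fderiv ℝ G q (q.pullbackDeriv A) = 0 := by
  have hcomp : HasDerivAt (fun τ : ℝ => G (q.pullback (NormedSpace.exp (τ • A))))
      (fderiv ℝ G q (q.pullbackDeriv A)) 0 :=
    hG.hasFDerivAt.comp_hasDerivAt_of_eq 0 (Jet2.hasDerivAt_pullback_exp A q)
      (by simp [Jet2.pullback_one])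
  have hconst (τ : ℝ) : G (q.pullback (NormedSpace.exp (τ • A))) = G q :=
    hinv _ (exp_transpose_mul_exp_of_skew (by simp [hA]))
  simp only [hconst] at hcomp
  exact hcomp.unique (hasDerivAt_const 0 (G q))

theorem Jet2.sum_map_single {F : Type*} [AddCommGroup F] [Module ℝ F] (T : Jet2 ι →ₗ[ℝ] F)
    (q : Jet2 ι) :
    T q = (∑ s, ∑ t, q.1 s t • T (Pi.single s (Pi.single t 1), 0, 0))
      + (∑ s, q.2.1 s • T (0, Pi.single s 1, 0)) + q.2.2 • T (0, 0, 1) := by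
  have hq : q = (∑ s, ∑ t, q.1 s t • ((Pi.single s (Pi.single t 1), 0, 0) : Jet2 ι))
      + (∑ s, q.2.1 s • ((0, Pi.single s 1, 0) : Jet2 ι)) + q.2.2 • ((0, 0, 1) : Jet2 ι) := by
    ext <;> simp [Prod.fst_sum, Prod.snd_sum, Finset.sum_apply, Pi.single_apply]
  conv_lhs => rw [hq]
  simp only [map_add, map_sum, map_smul]

end Jets

section LinearVectorField

variable {𝕜 E F : Type*} [RCLike 𝕜] [NormedAddCommGroup E] [NormedSpace 𝕜 E]
  [NormedAddCommGroup F] [NormedSpace 𝕜 F]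

theorem fderivWithin_fderivWithin_apply_linear {s : Set E} {f : E → F} {x : E}
    (hf : ContDiffWithinAt 𝕜 2 f s x) (hs : UniqueDiffOn 𝕜 s) (hx : x ∈ s)
    (hxi : x ∈ closure (interior s)) (B : E →L[𝕜] E) (e : E) :
    fderivWithin 𝕜 (fun y => fderivWithin 𝕜 f s y (B y)) s x e =
      fderivWithin 𝕜 (fun y => fderivWithin 𝕜 f s y e) s x (B x) +
        fderivWithin 𝕜 f s x (B e) := by
  have hDf : DifferentiableWithinAt 𝕜 (fderivWithin 𝕜 f s) s x :=
    (hf.fderivWithin_right hs (m := 1) (by norm_num) hx).differentiableWithinAt one_ne_zero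
  have hsymm : IsSymmSndFDerivWithinAt 𝕜 f s x :=
    hf.isSymmSndFDerivWithinAt (by simp) hs hxi hx
  rw [fderivWithin_clm_apply (hs x hx) hDf B.differentiableWithinAt,
    fderivWithin_clm_apply (hs x hx) hDf (differentiableWithinAt_const e),
    B.fderivWithin (hs x hx)]
  simp [hsymm.eq e (B x), add_comm]

end LinearVectorField

section JetOfFunction

variable {n : ℕ} {Ω : Set (Euc n)} {u f : Euc n → ℝ} {x : Euc n}

theorem contDiffOn_pd1 {k m : WithTop ℕ∞} (hf : ContDiffOn ℝ k f Ω) (hΩ : UniqueDiffOn ℝ Ω)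
    (hmk : m + 1 ≤ k) (s : Fin n) : ContDiffOn ℝ m (fun y => pd1 Ω f y s) Ω :=
  (hf.fderivWithin hΩ hmk).clm_apply contDiffOn_const

theorem pd1_add_sum_const_mul {κ : Type*} [Fintype κ] {g : κ → Euc n → ℝ}
    (hΩx : UniqueDiffWithinAt ℝ Ω x) (hf : DifferentiableWithinAt ℝ f Ω x)
    (hg : ∀ l, DifferentiableWithinAt ℝ (g l) Ω x) (c : κ → ℝ) (t : Fin n) :
    pd1 Ω (fun y => f y + ∑ l, c l * g l y) x t =
      pd1 Ω f x t + ∑ l, c l * pd1 Ω (g l) x t := by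
  have hcg (l : κ) : DifferentiableWithinAt ℝ (fun y => c l * g l y) Ω x := (hg l).const_mul (c l)
  simp only [pd1]
  rw [fderivWithin_fun_add hΩx hf (.fun_sum fun l _ => hcg l),
    fderivWithin_fun_sum hΩx fun l _ => hcg l]
  simp [fderivWithin_const_mul hΩx (hg _)]

theorem hasFDerivWithinAt_qpt (hu : ContDiffOn ℝ 3 u Ω) (hΩ : UniqueDiffOn ℝ Ω) (hx : x ∈ Ω) :
    HasFDerivWithinAt (qpt Ω u)
      ((ContinuousLinearMap.pi fun s => ContinuousLinearMap.pi fun t =>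
          fderivWithin ℝ (fun y => pd2 Ω u y s t) Ω x).prod
        ((ContinuousLinearMap.pi fun s => fderivWithin ℝ (fun y => pd1 Ω u y s) Ω x).prod
          (fderivWithin ℝ u Ω x))) Ω x := by
  have hu₁ (s : Fin n) : ContDiffOn ℝ 2 (fun y => pd1 Ω u y s) Ω :=
    contDiffOn_pd1 hu hΩ (by norm_num) s
  have hu₂ (s t : Fin n) : ContDiffOn ℝ 1 (fun y => pd2 Ω u y s t) Ω :=
    contDiffOn_pd1 (hu₁ s) hΩ (by norm_num) t
  refine HasFDerivWithinAt.prodMk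
    (hasFDerivWithinAt_pi.2 fun s => hasFDerivWithinAt_pi.2 fun t => ?_)
    (HasFDerivWithinAt.prodMk (hasFDerivWithinAt_pi.2 fun s => ?_) ?_)
  · exact ((hu₂ s t).differentiableOn (by norm_num) x hx).hasFDerivWithinAt
  · exact ((hu₁ s).differentiableOn (by norm_num) x hx).hasFDerivWithinAt
  · exact (hu.differentiableOn (by norm_num) x hx).hasFDerivWithinAt

/-- The derivative of `f` within `Ω` along the linear vector field `y ↦ By`. When `B` is
skew-symmetric this is an angular derivative: the field generates rotations. -/
noncomputable def linearFieldDeriv {F : Type*} [NormedAddCommGroup F] [NormedSpace ℝ F]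
    (Ω : Set (Euc n)) (B : Matrix (Fin n) (Fin n) ℝ) (f : Euc n → F) (x : Euc n) : F :=
  fderivWithin ℝ f Ω x (Matrix.toEuclideanCLM (𝕜 := ℝ) B x)

theorem fderivWithin_toEuclideanCLM_single (B : Matrix (Fin n) (Fin n) ℝ) (s : Fin n) :
    fderivWithin ℝ f Ω x (Matrix.toEuclideanCLM (𝕜 := ℝ) B (EuclideanSpace.single s 1)) =
      ∑ l, B l s * pd1 Ω f x l := by
  have hcol : Matrix.toEuclideanCLM (𝕜 := ℝ) B (EuclideanSpace.single s 1) =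
      ∑ l, B l s • (EuclideanSpace.single l 1 : Euc n) := by
    ext l
    simp [Finset.sum_apply, Pi.single_apply]
  simp [hcol, pd1]

theorem pd1_linearFieldDeriv (hf : ContDiffOn ℝ 2 f Ω) (hΩ : UniqueDiffOn ℝ Ω)
    (hΩi : Ω ⊆ closure (interior Ω)) (hx : x ∈ Ω) (B : Matrix (Fin n) (Fin n) ℝ) (s : Fin n) :
    pd1 Ω (linearFieldDeriv Ω B f) x s =
      linearFieldDeriv Ω B (fun y => pd1 Ω f y s) x + ∑ l, B l s * pd1 Ω f x l := by
  rw [← fderivWithin_toEuclideanCLM_single]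
  exact fderivWithin_fderivWithin_apply_linear (hf x hx) hΩ hx (hΩi hx) _ _

theorem pd2_linearFieldDeriv (hu : ContDiffOn ℝ 3 u Ω) (hΩ : UniqueDiffOn ℝ Ω)
    (hΩi : Ω ⊆ closure (interior Ω)) (hx : x ∈ Ω) (B : Matrix (Fin n) (Fin n) ℝ) (s t : Fin n) :
    pd2 Ω (linearFieldDeriv Ω B u) x s t =
      linearFieldDeriv Ω B (fun y => pd2 Ω u y s t) x + ∑ l, B l t * pd2 Ω u x s l +
        ∑ l, B l s * pd2 Ω u x l t := by
  have hu₁ (l : Fin n) : ContDiffOn ℝ 2 (fun y => pd1 Ω u y l) Ω :=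
    contDiffOn_pd1 hu hΩ (by norm_num) l
  have hdu₁ (l : Fin n) : DifferentiableWithinAt ℝ (fun y => pd1 Ω u y l) Ω x :=
    (hu₁ l).differentiableOn (by norm_num) x hx
  have hBu₁ : DifferentiableWithinAt ℝ (linearFieldDeriv Ω B fun y => pd1 Ω u y s) Ω x :=
    (((hu₁ s).fderivWithin hΩ (m := 1) (by norm_num)).clm_apply
      (ContinuousLinearMap.contDiff _).contDiffOn).differentiableOn (by norm_num) x hx
  have hpd1 : ∀ y ∈ Ω, pd1 Ω (linearFieldDeriv Ω B u) y s =
      linearFieldDeriv Ω B (fun y => pd1 Ω u y s) y + ∑ l, B l s * pd1 Ω u y l := fun y hy =>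
    pd1_linearFieldDeriv (hu.of_le (by norm_num)) hΩ hΩi hy B s
  calc pd2 Ω (linearFieldDeriv Ω B u) x s t
      = pd1 Ω (fun y => linearFieldDeriv Ω B (fun y => pd1 Ω u y s) y +
          ∑ l, B l s * pd1 Ω u y l) x t := by
        rw [pd2, pd1, fderivWithin_congr hpd1 (hpd1 x hx)]
    _ = pd1 Ω (linearFieldDeriv Ω B fun y => pd1 Ω u y s) x t + ∑ l, B l s * pd2 Ω u x l t :=
        pd1_add_sum_const_mul (hΩ x hx) hBu₁ hdu₁ _ t
    _ = _ := by
        rw [pd1_linearFieldDeriv (hu₁ s) hΩ hΩi hx B t]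
        rfl

theorem qpt_linearFieldDeriv (hu : ContDiffOn ℝ 3 u Ω) (hΩ : UniqueDiffOn ℝ Ω)
    (hΩi : Ω ⊆ closure (interior Ω)) (hx : x ∈ Ω) (B : Matrix (Fin n) (Fin n) ℝ) :
    qpt Ω (linearFieldDeriv Ω B u) x =
      linearFieldDeriv Ω B (qpt Ω u) x + Jet2.pullbackDeriv B (qpt Ω u x) := by
  rw [linearFieldDeriv, (hasFDerivWithinAt_qpt hu hΩ hx).fderivWithin (hΩ x hx)]
  refine Prod.ext (funext₂ fun s t => ?_) (Prod.ext (funext fun s => ?_) ?_)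
  · simp only [qpt, pd2_linearFieldDeriv hu hΩ hΩi hx, linearFieldDeriv, Prod.mk_add_mk,
      ContinuousLinearMap.prod_apply, ContinuousLinearMap.coe_pi', Jet2.pullbackDeriv,
      Matrix.add_apply, Matrix.mul_apply, Matrix.transpose_apply, Matrix.of_apply, Pi.add_apply,
      mul_comm (pd2 Ω u x s _)]
    ring
  · simp [qpt, Jet2.pullbackDeriv, pd1_linearFieldDeriv (hu.of_le (by norm_num)) hΩ hΩi hx,
      Matrix.mulVec, dotProduct, linearFieldDeriv]
  · simp [qpt, Jet2.pullbackDeriv, linearFieldDeriv]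

end JetOfFunction

section ChainRule

variable {𝕜 E F : Type*} [NontriviallyNormedField 𝕜] [NormedAddCommGroup E] [NormedSpace 𝕜 E]
  [NormedAddCommGroup F] [NormedSpace 𝕜 F]

theorem fderivWithin_comp_graph {s : Set E} {u : E → 𝕜} {ψ : E × 𝕜 → F} {x : E}
    (hψ : DifferentiableAt 𝕜 ψ (x, u x)) (hu : DifferentiableWithinAt 𝕜 u s x)
    (hs : UniqueDiffWithinAt 𝕜 s x) (e : E) :
    fderivWithin 𝕜 (fun y => ψ (y, u y)) s x e =
      fderiv 𝕜 (fun y => ψ (y, u x)) x e +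
        fderivWithin 𝕜 u s x e • deriv (fun t => ψ (x, t)) (u x) := by
  have hbase : fderiv 𝕜 (fun y => ψ (y, u x)) x e = fderiv 𝕜 ψ (x, u x) (e, 0) := by
    have hcomp : HasFDerivAt (fun y => ψ (y, u x)) _ x :=
      hψ.hasFDerivAt.comp (f := fun y => (y, u x)) x (hasFDerivAt_prodMk_left x (u x))
    simp [hcomp.fderiv]
  have hfiber : deriv (fun t => ψ (x, t)) (u x) = fderiv 𝕜 ψ (x, u x) (0, 1) := by
    have hcomp : HasDerivAt (fun t => ψ (x, t)) _ (u x) :=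
      hψ.hasFDerivAt.comp_hasDerivAt (f := fun t => (x, t)) (u x)
        (hasFDerivAt_prodMk_right x (u x)).hasDerivAt
    simp [hcomp.deriv]
  have hgraph : fderivWithin 𝕜 (fun y => ψ (y, u y)) s x e =
      fderiv 𝕜 ψ (x, u x) (e, fderivWithin 𝕜 u s x e) := by
    have hcomp : HasFDerivWithinAt (fun y => ψ (y, u y)) _ s x :=
      hψ.hasFDerivAt.comp_hasFDerivWithinAt (f := fun y => (y, u y)) x
        ((hasFDerivWithinAt_id x s).prodMk hu.hasFDerivWithinAt)
    simp [hcomp.fderivWithin hs]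
  rw [hbase, hfiber, hgraph, ← map_smul, ← map_add]
  simp

end ChainRule

section InvariantEquation

variable {n : ℕ} {Ω : Set (Euc n)} {u : Euc n → ℝ} {ψ : Euc n × ℝ → ℝ} {G : Jet2 (Fin n) → ℝ}
  {x : Euc n}

theorem fderiv_qpt_linearFieldDeriv_of_skew (hΩ : UniqueDiffOn ℝ Ω)
    (hΩi : Ω ⊆ closure (interior Ω)) (hu : ContDiffOn ℝ 3 u Ω) (hx : x ∈ Ω)
    (hψ : DifferentiableAt ℝ ψ (x, u x)) (hG : DifferentiableAt ℝ G (qpt Ω u x))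
    (hinv : ∀ O : Matrix (Fin n) (Fin n) ℝ, Oᵀ * O = 1 →
      G (Jet2.pullback O (qpt Ω u x)) = G (qpt Ω u x))
    (heq : ∀ y ∈ Ω, G (qpt Ω u y) = ψ (y, u y))
    {A : Matrix (Fin n) (Fin n) ℝ} (hA : Aᵀ = -A) :
    fderiv ℝ G (qpt Ω u x) (qpt Ω (linearFieldDeriv Ω A u) x) =
      fderiv ℝ (fun y => ψ (y, u x)) x (Matrix.toEuclideanCLM (𝕜 := ℝ) A x) +
        linearFieldDeriv Ω A u x * deriv (fun t => ψ (x, t)) (u x) := by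
  have hdq := (hasFDerivWithinAt_qpt hu hΩ hx).differentiableWithinAt
  have hdu : DifferentiableWithinAt ℝ u Ω x := hu.differentiableOn (by norm_num) x hx
  calc fderiv ℝ G (qpt Ω u x) (qpt Ω (linearFieldDeriv Ω A u) x)
      = fderiv ℝ G (qpt Ω u x) (linearFieldDeriv Ω A (qpt Ω u) x) := by
        rw [qpt_linearFieldDeriv hu hΩ hΩi hx, map_add, fderiv_pullbackDeriv_eq_zero hG hinv hA,
          add_zero]
    _ = linearFieldDeriv Ω A (fun y => G (qpt Ω u y)) x :=
        (DFunLike.congr_fun (fderiv_comp_fderivWithin x hG hdq (hΩ x hx)) _).symm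
    _ = linearFieldDeriv Ω A (fun y => ψ (y, u y)) x := by
        rw [linearFieldDeriv, linearFieldDeriv, fderivWithin_congr heq (heq x hx)]
    _ = _ := fderivWithin_comp_graph hψ hdu (hΩ x hx) _

/-- The generator `x_i ∂_j − x_j ∂_i` of the rotations in the `(i, j)` coordinate plane. -/
def rotationGenerator (i j : Fin n) : Matrix (Fin n) (Fin n) ℝ :=
  Matrix.single j i 1 - Matrix.single i j 1

theorem rotationGenerator_transpose (i j : Fin n) :
    (rotationGenerator i j)ᵀ = -rotationGenerator i j := by
  simp [rotationGenerator]

theorem toEuclideanCLM_rotationGenerator (i j : Fin n) (y : Euc n) :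
    Matrix.toEuclideanCLM (𝕜 := ℝ) (rotationGenerator i j) y =
      y i • EuclideanSpace.single j 1 - y j • EuclideanSpace.single i 1 := by
  ext l
  simp [rotationGenerator, Matrix.mulVec, dotProduct, Matrix.single_apply, ite_and, eq_comm]

theorem linearFieldDeriv_rotationGenerator (i j : Fin n) :
    linearFieldDeriv Ω (rotationGenerator i j) u =
      fun y => y i * pd1 Ω u y j - y j * pd1 Ω u y i := by
  ext y
  simp [linearFieldDeriv, toEuclideanCLM_rotationGenerator, pd1]

theorem stmt_10_general (hΩ : UniqueDiffOn ℝ Ω) (hΩi : Ω ⊆ closure (interior Ω))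
    (hu : ContDiffOn ℝ 3 u Ω) (hx : x ∈ Ω)
    (hψ : DifferentiableAt ℝ ψ (x, u x)) (hG : DifferentiableAt ℝ G (qpt Ω u x))
    (hinv : ∀ O : Matrix (Fin n) (Fin n) ℝ, Oᵀ * O = 1 →
      G (Jet2.pullback O (qpt Ω u x)) = G (qpt Ω u x))
    (heq : ∀ y ∈ Ω, G (qpt Ω u y) = ψ (y, u y)) (i j : Fin n) :
    (∑ s, ∑ t, fderiv ℝ G (qpt Ω u x) (Pi.single s (Pi.single t 1), 0, 0)
        * pd2 Ω (fun y => y i * pd1 Ω u y j - y j * pd1 Ω u y i) x s t)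
    + (∑ s, fderiv ℝ G (qpt Ω u x) (0, Pi.single s 1, 0)
        * pd1 Ω (fun y => y i * pd1 Ω u y j - y j * pd1 Ω u y i) x s)
    = (deriv (fun t => ψ (x, t)) (u x) - fderiv ℝ G (qpt Ω u x) (0, 0, 1))
          * (x i * pd1 Ω u x j - x j * pd1 Ω u x i)
      + x i * fderiv ℝ (fun y => ψ (y, u x)) x (EuclideanSpace.single j 1)
      - x j * fderiv ℝ (fun y => ψ (y, u x)) x (EuclideanSpace.single i 1) := by
  have hskew := fderiv_qpt_linearFieldDeriv_of_skew hΩ hΩi hu hx hψ hG hinv heq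
    (rotationGenerator_transpose i j)
  have hcoord := Jet2.sum_map_single (fderiv ℝ G (qpt Ω u x)).toLinearMap
    (qpt Ω (linearFieldDeriv Ω (rotationGenerator i j) u) x)
  rw [ContinuousLinearMap.coe_coe, hskew] at hcoord
  simp only [linearFieldDeriv_rotationGenerator, toEuclideanCLM_rotationGenerator, map_sub,
    map_smul, smul_eq_mul] at hcoord
  simp only [mul_comm (fderiv ℝ G _ _)]
  change _ = (∑ s, ∑ t, pd2 Ω _ x s t * _) + (∑ s, pd1 Ω _ x s * _) + (_ - _) * _ at hcoord
  linear_combination -hcoord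

end InvariantEquation

/-- the rotation-invariance identity L(x_i u_j − x_j u_i) =
(ψ_z − G_u)(x_i u_j − x_j u_i) + x_i ψ_{x_j} − x_j ψ_{x_i} (Lemma 4.3 of the paper). -/
theorem stmt_10 {n : ℕ} (hn : 2 ≤ n) (Ω : Set (Euc n)) (hΩo : IsOpen Ω)
    (u : Euc n → ℝ) (hu : ContDiffOn ℝ 3 u Ω)
    (ψ : Euc n × ℝ → ℝ) (hψ : ContDiffOn ℝ 1 ψ (Ω ×ˢ (Set.univ : Set ℝ)))
    (G : (Fin n → Fin n → ℝ) × (Fin n → ℝ) × ℝ → ℝ)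
    (D : Set ((Fin n → Fin n → ℝ) × (Fin n → ℝ) × ℝ)) (hD : IsOpen D)
    (hG : ContDiffOn ℝ 1 G D)
    (hmem : ∀ x ∈ Ω, qpt Ω u x ∈ D)
    (hinv : ∀ O : Matrix (Fin n) (Fin n) ℝ, Oᵀ * O = 1 → ∀ q ∈ D,
      G ((fun i j => (Oᵀ * Matrix.of q.1 * O) i j), Matrix.mulVec Oᵀ q.2.1, q.2.2) = G q)
    (heq : ∀ x ∈ Ω, G (qpt Ω u x) = ψ (x, u x)) :
    ∀ x ∈ Ω, ∀ i j : Fin n,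
      (∑ s, ∑ t, fderiv ℝ G (qpt Ω u x) (Pi.single s (Pi.single t 1), 0, 0)
          * pd2 Ω (fun y => y i * pd1 Ω u y j - y j * pd1 Ω u y i) x s t)
      + (∑ s, fderiv ℝ G (qpt Ω u x) (0, Pi.single s 1, 0)
          * pd1 Ω (fun y => y i * pd1 Ω u y j - y j * pd1 Ω u y i) x s)
      = (deriv (fun t => ψ (x, t)) (u x) - fderiv ℝ G (qpt Ω u x) (0, 0, 1))
            * (x i * pd1 Ω u x j - x j * pd1 Ω u x i)
        + x i * fderiv ℝ (fun y => ψ (y, u x)) x (EuclideanSpace.single j 1)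
        - x j * fderiv ℝ (fun y => ψ (y, u x)) x (EuclideanSpace.single i 1) := by
  intro x hx
  have hψx : DifferentiableAt ℝ ψ (x, u x) :=
    (hψ.contDiffAt (prod_mem_nhds (hΩo.mem_nhds hx) Filter.univ_mem)).differentiableAt one_ne_zero
  have hGx : DifferentiableAt ℝ G (qpt Ω u x) :=
    (hG.contDiffAt (hD.mem_nhds (hmem x hx))).differentiableAt one_ne_zero
  exact stmt_10_general hΩo.uniqueDiffOn (hΩo.interior_eq.symm ▸ subset_closure) hu hx hψx hGx
    (fun O hO => hinv O hO _ (hmem x hx)) heq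
end

section
/- Let K ⊆ ℝⁿ be an open convex symmetric cone containing K_n^+, and let f : K → ℝ be C¹, symmetric (invariant under permutations of coordinates), concave on K, positively homogeneous of degree one, and normalized by f(1,…,1) = 1. Then Σ_{i=1}^{n} ∂f/∂λ_i (λ) ≥ 1 for every λ ∈ K. -/
open scoped BigOperators
open Set

/-!
The tangent plane of a concave function lies above its graph, so
`f 1 ≤ f p + Df_p (1 - p) = Df_p 1 + (f p - Df_p p)` with `1 = (1, …, 1)`. The last bracket
vanishes by Euler's identity `Df_p p = f p`, and `Df_p 1` is the sum of the partial derivatives of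
`f` at `p`.
-/

section

open Filter Topology

variable {E F : Type*} [NormedAddCommGroup E] [NormedSpace ℝ E]
  [NormedAddCommGroup F] [NormedSpace ℝ F]

theorem hasFDerivAt_apply_self_of_homogeneous {f : E → F} {f' : E →L[ℝ] F} {x : E} {r : ℝ}
    (hf : HasFDerivAt f f' x) (hhom : ∀ᶠ t : ℝ in 𝓝 1, f (t • x) = t ^ r • f x) :
    f' x = r • f x := by
  have hray : HasDerivAt (fun t : ℝ => t • x) x 1 := by
    simpa only [one_smul] using (hasDerivAt_id' (1 : ℝ)).smul_const x
  have hchain : HasDerivAt (fun t : ℝ => f (t • x)) (f' x) 1 :=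
    HasFDerivAt.comp_hasDerivAt 1 (by simpa only [one_smul] using hf) hray
  have hpower : HasDerivAt (fun t : ℝ => t ^ r • f x) (r • f x) 1 := by
    simpa only [Real.one_rpow, mul_one] using
      (Real.hasDerivAt_rpow_const (p := r) (Or.inl one_ne_zero)).smul_const (f x)
  exact hchain.unique (hpower.congr_of_eventuallyEq hhom)

theorem concaveOn_sub_le_of_hasFDerivWithinAt {s : Set E} {f : E → ℝ} {f' : E →L[ℝ] ℝ} {x y : E}
    (hconc : ConcaveOn ℝ s f) (hf : HasFDerivWithinAt f f' s x) (hx : x ∈ s) (hy : y ∈ s) :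
    f y - f x ≤ f' (y - x) := by
  let line : ℝ →ᵃ[ℝ] E := AffineMap.lineMap x y
  have hline_zero : line 0 = x := AffineMap.lineMap_apply_zero x y
  have hline_one : line 1 = y := AffineMap.lineMap_apply_one x y
  have hderiv : HasDerivWithinAt (f ∘ line) (f' (y - x)) (line ⁻¹' s) 0 :=
    HasFDerivWithinAt.comp_hasDerivWithinAt 0 (by rwa [hline_zero])
      AffineMap.hasDerivWithinAt_lineMap (mapsTo_preimage line s)
  have hslope : slope (f ∘ line) 0 1 ≤ f' (y - x) :=
    (hconc.comp_affineMap line).slope_le_of_hasDerivWithinAt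
      (by rwa [mem_preimage, hline_zero]) (by rwa [mem_preimage, hline_one]) zero_lt_one hderiv
  simpa only [slope_def_field, Function.comp_apply, hline_zero, hline_one, sub_zero, div_one]
    using hslope

theorem concaveOn_le_apply_of_hasFDerivAt_of_homogeneous {s : Set E} {f : E → ℝ} {f' : E →L[ℝ] ℝ}
    {x y : E} (hconc : ConcaveOn ℝ s f) (hf : HasFDerivAt f f' x)
    (hhom : ∀ᶠ t : ℝ in 𝓝 1, f (t • x) = t * f x) (hx : x ∈ s) (hy : y ∈ s) :
    f y ≤ f' y := by
  have euler : f' x = f x := by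
    simpa only [one_smul] using hasFDerivAt_apply_self_of_homogeneous (r := 1) hf
      (by simpa only [Real.rpow_one, smul_eq_mul] using hhom)
  have tangent : f y - f x ≤ f' (y - x) :=
    concaveOn_sub_le_of_hasFDerivWithinAt hconc hf.hasFDerivWithinAt hx hy
  rw [map_sub, euler] at tangent
  exact (sub_le_sub_iff_right (f x)).mp tangent

theorem stmt_12_general {ι : Type*} [Fintype ι] [DecidableEq ι] {K : Set (ι → ℝ)}
    {f : (ι → ℝ) → ℝ} {p : ι → ℝ} (hconc : ConcaveOn ℝ K f) (hf : DifferentiableAt ℝ f p)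
    (hhom : ∀ᶠ t : ℝ in 𝓝 1, f (t • p) = t * f p) (hp : p ∈ K) (hone : (fun _ => 1) ∈ K) :
    f (fun _ => 1) ≤ ∑ i, fderiv ℝ f p (Pi.single i 1) := by
  rw [← map_sum, Finset.univ_sum_single (fun _ : ι => (1 : ℝ))]
  exact concaveOn_le_apply_of_hasFDerivAt_of_homogeneous hconc hf.hasFDerivAt hhom hp hone

end

/-- Σ_i f_i(λ) ≥ 1 for a normalized concave symmetric homogeneous
curvature function (inequality (1.12) of the paper). -/
theorem stmt_12 {n : ℕ} (hn : 2 ≤ n) (K : Set (Fin n → ℝ)) (hK : IsSymmCone K)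
    (f : (Fin n → ℝ) → ℝ) (hf1 : ContDiffOn ℝ 1 f K)
    (hsym : ∀ p ∈ K, ∀ g : Equiv.Perm (Fin n), f (p ∘ g) = f p)
    (hconc : ConcaveOn ℝ K f)
    (hfh : ∀ t : ℝ, 0 < t → ∀ p ∈ K, f (t • p) = t * f p)
    (hfn : f (fun _ => 1) = 1) :
    ∀ p ∈ K, 1 ≤ ∑ i, fderiv ℝ f p (Pi.single i 1) := by
  obtain ⟨hopen, -, -, -, hpos⟩ := hK
  exact fun p hp => hfn.ge.trans <| stmt_12_general hconc
    ((hf1.differentiableOn one_ne_zero).differentiableAt (hopen.mem_nhds hp))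
    ((eventually_gt_nhds one_pos).mono fun t ht => hfh t ht p hp) hp (hpos fun _ => one_pos)
end

section
/- Let n ≥ 2 and 1 ≤ l < k ≤ n. Let σ_k(λ) = e_k(λ)/C(n,k) denote the normalized k-th elementary symmetric polynomial of λ ∈ ℝⁿ (e_k the k-th elementary symmetric polynomial, C(n,k) the binomial coefficient), and set f(λ) = (σ_k(λ)/σ_l(λ))^{1/(k−l)} wherever σ_l(λ) > 0 and σ_k(λ) > 0. Then: (a) lim_{R→+∞} f(1,…,1,1+R) = (k/l)^{1/(k−l)}; and (b) f satisfies condition (1.10): there exist ε₀ > 0, δ₀ > 0 and R₀ > 0 such that f(λ₁,…,λ_{n−1},λ_n+R) is defined and ≥ 1 + ε₀ for all R ≥ R₀ and all λ ∈ ℝⁿ with |λ − (1,…,1)| < δ₀. -/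
open scoped BigOperators
open Set

/-- The k-th elementary symmetric polynomial of p ∈ ℝⁿ. -/
def esymmFun (n k : ℕ) (p : Fin n → ℝ) : ℝ :=
  ∑ t ∈ Finset.univ.powersetCard k, ∏ i ∈ t, p i

/-- The normalized k-th elementary symmetric polynomial σ_k = e_k / C(n,k). -/
noncomputable def sigmaNorm (n k : ℕ) (p : Fin n → ℝ) : ℝ :=
  esymmFun n k p / (n.choose k : ℝ)

/-- The curvature quotient f = (σ_k/σ_l)^{1/(k−l)}. -/
noncomputable def fquot (n k l : ℕ) (p : Fin n → ℝ) : ℝ :=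
  (sigmaNorm n k p / sigmaNorm n l p) ^ ((1:ℝ) / ((k : ℝ) - (l : ℝ)))

/-!
Each `e_k` is affine in every coordinate: with the others fixed, `e_{k+1}` has slope `e_k` of the
remaining coordinates. So, as `x → ∞` in one coordinate while `p → (1, …, 1)`, the quotient
`σ_k / x` tends to `C(n-1, k-1) / C(n, k) = k / n`, hence `(σ_k/σ_l)^{1/(k-l)}` tends to
`(k/l)^{1/(k-l)} > 1`. That the convergence is joint in `(x, p)` supplies the uniformity
in condition (1.10).
-/

open Filter Topology

section ElementarySymmetric

variable {R : Type*} [CommSemiring R]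

theorem multiset_esymm_cons (a : R) (s : Multiset R) (k : ℕ) :
    (a ::ₘ s).esymm (k + 1) = s.esymm (k + 1) + a * s.esymm k := by
  simp [Multiset.esymm, Multiset.powersetCard_cons, Multiset.sum_map_mul_left]

theorem multiset_esymm_replicate_one (m k : ℕ) :
    (Multiset.replicate m (1 : R)).esymm k = m.choose k := by
  simpa using Finset.esymm_map_val (fun _ => (1 : R)) (Finset.range m) k

theorem continuous_esymm_map {ι : Type*} [TopologicalSpace R] [IsTopologicalSemiring R]
    (s : Finset ι) (k : ℕ) : Continuous fun p : ι → R => (s.val.map p).esymm k := by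
  simp only [Finset.esymm_map_val]
  fun_prop

theorem map_update_univ_val {ι α : Type*} [Fintype ι] [DecidableEq ι] (p : ι → α) (i : ι) (x : α) :
    Finset.univ.val.map (Function.update p i x) = x ::ₘ (Finset.univ.erase i).val.map p := by
  rw [← Finset.insert_erase (Finset.mem_univ i),
    Finset.insert_val_of_notMem (Finset.notMem_erase i _), Multiset.map_cons,
    Function.update_self, Finset.insert_erase (Finset.mem_univ i)]
  congr 1
  exact Multiset.map_congr rfl fun j hj =>
    Function.update_of_ne (Finset.ne_of_mem_erase hj) x p

end ElementarySymmetric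

theorem choose_pred_div_choose {K : Type*} [Field K] [CharZero K] {n k : ℕ} (hk : 0 < k)
    (hkn : k ≤ n) : ((n - 1).choose (k - 1) : K) / n.choose k = k / n := by
  have hn : (n : K) ≠ 0 := Nat.cast_ne_zero.2 (hk.trans_le hkn).ne'
  have hchoose : (n.choose k : K) ≠ 0 := Nat.cast_ne_zero.2 (Nat.choose_pos hkn).ne'
  rw [div_eq_div_iff hchoose hn]
  have habsorb : n * (n - 1).choose (k - 1) = n.choose k * k := by
    simpa only [Nat.sub_add_cancel hk, Nat.sub_add_cancel (hk.trans_le hkn)] using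
      Nat.add_one_mul_choose_eq (n - 1) (k - 1)
  rw [mul_comm, mul_comm (k : K)]
  exact_mod_cast habsorb

section Limits

variable {n k l : ℕ} {α : Type*} {F : Filter α} {p : α → Fin n → ℝ} {x : α → ℝ}

theorem esymmFun_succ_update (k : ℕ) (p : Fin n → ℝ) (i : Fin n) (x : ℝ) :
    esymmFun n (k + 1) (Function.update p i x) =
      ((Finset.univ.erase i).val.map p).esymm (k + 1) +
        x * ((Finset.univ.erase i).val.map p).esymm k := by
  rw [esymmFun, ← Finset.esymm_map_val, map_update_univ_val, multiset_esymm_cons]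

theorem tendsto_esymmFun_succ_update_div {q : Fin n → ℝ} (k : ℕ) (hp : Tendsto p F (𝓝 q))
    (hx : Tendsto x F atTop) (i : Fin n) :
    Tendsto (fun a => esymmFun n (k + 1) (Function.update (p a) i (x a)) / x a) F
      (𝓝 (((Finset.univ.erase i).val.map q).esymm k)) := by
  have hE (m : ℕ) := ((continuous_esymm_map (Finset.univ.erase i) m).tendsto q).comp hp
  have hlim := ((hE (k + 1)).div_atTop hx).add (hE k)
  rw [zero_add] at hlim
  refine hlim.congr' ?_
  filter_upwards [hx.eventually_ne_atTop 0] with a ha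
  rw [esymmFun_succ_update, add_div, mul_div_cancel_left₀ _ ha]
  rfl

theorem tendsto_sigmaNorm_update_div (hk : 0 < k) (hkn : k ≤ n) (hp : Tendsto p F (𝓝 1))
    (hx : Tendsto x F atTop) (i : Fin n) :
    Tendsto (fun a => sigmaNorm n k (Function.update (p a) i (x a)) / x a) F
      (𝓝 ((k : ℝ) / n)) := by
  have hlim := (tendsto_esymmFun_succ_update_div (k - 1) hp hx i).div_const (n.choose k : ℝ)
  have hslope : ((Finset.univ.erase i).val.map (1 : Fin n → ℝ)).esymm (k - 1) =
      (n - 1).choose (k - 1) := by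
    simpa using multiset_esymm_replicate_one (R := ℝ) (n - 1) (k - 1)
  rw [hslope, choose_pred_div_choose hk hkn, Nat.sub_add_cancel hk] at hlim
  simpa only [sigmaNorm, div_right_comm] using hlim

theorem eventually_sigmaNorm_update_pos (hk : 0 < k) (hkn : k ≤ n) (hp : Tendsto p F (𝓝 1))
    (hx : Tendsto x F atTop) (i : Fin n) :
    ∀ᶠ a in F, 0 < sigmaNorm n k (Function.update (p a) i (x a)) := by
  have hlim_pos : 0 < (k : ℝ) / n :=
    div_pos (Nat.cast_pos.2 hk) (Nat.cast_pos.2 (hk.trans_le hkn))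
  filter_upwards [(tendsto_sigmaNorm_update_div hk hkn hp hx i).eventually_const_lt hlim_pos,
    hx.eventually_gt_atTop 0] with a hdiv ha
  exact (div_pos_iff_of_pos_right ha).1 hdiv

theorem tendsto_fquot_update (hk : 0 < k) (hkn : k ≤ n) (hl : 0 < l) (hln : l ≤ n)
    (hp : Tendsto p F (𝓝 1)) (hx : Tendsto x F atTop) (i : Fin n) :
    Tendsto (fun a => fquot n k l (Function.update (p a) i (x a))) F
      (𝓝 (((k : ℝ) / l) ^ ((1 : ℝ) / ((k : ℝ) - l)))) := by
  have hk0 : (k : ℝ) ≠ 0 := Nat.cast_ne_zero.2 hk.ne'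
  have hl0 : (l : ℝ) ≠ 0 := Nat.cast_ne_zero.2 hl.ne'
  have hn0 : (n : ℝ) ≠ 0 := Nat.cast_ne_zero.2 (hk.trans_le hkn).ne'
  have hratio := (tendsto_sigmaNorm_update_div hk hkn hp hx i).div
    (tendsto_sigmaNorm_update_div hl hln hp hx i) (div_ne_zero hl0 hn0)
  rw [div_div_div_cancel_right₀ hn0] at hratio
  refine (hratio.rpow_const (Or.inl (div_ne_zero hk0 hl0))).congr' ?_
  filter_upwards [hx.eventually_ne_atTop 0] with a ha
  simp only [Pi.div_apply, div_div_div_cancel_right₀ ha, fquot]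

end Limits

section Uniformity

variable {ι : Type*} [Fintype ι]

theorem dist_le_sqrt_sum_sq_sub (p q : ι → ℝ) : dist p q ≤ √(∑ i, (p i - q i) ^ 2) := by
  refine (dist_pi_le_iff (Real.sqrt_nonneg _)).2 fun i => Real.abs_le_sqrt ?_
  exact Finset.single_le_sum (f := fun j => (p j - q j) ^ 2) (fun _ _ => sq_nonneg _)
    (Finset.mem_univ i)

theorem exists_forall_of_eventually_atTop_prod_nhds {P : ℝ → (ι → ℝ) → Prop} {q : ι → ℝ}
    (h : ∀ᶠ a in atTop ×ˢ 𝓝 q, P a.1 a.2) :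
    ∃ δ > (0 : ℝ), ∃ R₀ > (0 : ℝ), ∀ R ≥ R₀, ∀ p : ι → ℝ,
      √(∑ i, (p i - q i) ^ 2) < δ → P R p := by
  obtain ⟨⟨R₀, δ⟩, ⟨hR₀, hδ⟩, hP⟩ :=
    (((atTop_basis_Ioi' (0 : ℝ)).prod Metric.nhds_basis_ball).eventually_iff).1 h
  refine ⟨δ, hδ, R₀ + 1, by positivity, fun R hR p hp => ?_⟩
  exact hP (x := (R, p)) ⟨(lt_add_one R₀).trans_le hR, (dist_le_sqrt_sum_sq_sub p q).trans_lt hp⟩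

end Uniformity

/-- the quotient (σ_k/σ_l)^{1/(k−l)} has limit (k/l)^{1/(k−l)} as the
last entry tends to infinity, and satisfies condition (1.10). -/
theorem stmt_13 {n k l : ℕ} (hn : 2 ≤ n) (hl : 1 ≤ l) (hlk : l < k) (hkn : k ≤ n) :
    Filter.Tendsto
      (fun R : ℝ =>
        fquot n k l (Function.update (fun _ => (1:ℝ)) (⟨n - 1, by omega⟩ : Fin n) (1 + R)))
      Filter.atTop
      (nhds (((k : ℝ) / (l : ℝ)) ^ ((1:ℝ) / ((k : ℝ) - (l : ℝ))))) ∧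
    (∃ ε₀ > (0:ℝ), ∃ δ₀ > (0:ℝ), ∃ R₀ > (0:ℝ), ∀ R ≥ R₀, ∀ p : Fin n → ℝ,
      Real.sqrt (∑ i, (p i - 1) ^ 2) < δ₀ →
      ∀ i : Fin n,
        0 < sigmaNorm n l (Function.update p i (p i + R)) ∧
        0 < sigmaNorm n k (Function.update p i (p i + R)) ∧
        1 + ε₀ ≤ fquot n k l (Function.update p i (p i + R))) := by
  have hk : 0 < k := Nat.zero_lt_of_lt hlk
  have hln : l ≤ n := hlk.le.trans hkn
  have hlim_gt : 1 < ((k : ℝ) / l) ^ ((1 : ℝ) / ((k : ℝ) - l)) :=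
    Real.one_lt_rpow ((one_lt_div (Nat.cast_pos.2 hl)).2 (Nat.cast_lt.2 hlk))
      (one_div_pos.2 (sub_pos.2 (Nat.cast_lt.2 hlk)))
  obtain ⟨c, hc, hclim⟩ := exists_between hlim_gt
  refine ⟨tendsto_fquot_update hk hkn hl hln tendsto_const_nhds
    (tendsto_atTop_add_const_left _ 1 tendsto_id) _, c - 1, sub_pos.2 hc, ?_⟩
  refine exists_forall_of_eventually_atTop_prod_nhds (q := 1) (eventually_all.2 fun i => ?_)
  have hp : Tendsto (Prod.snd : ℝ × (Fin n → ℝ) → Fin n → ℝ) (atTop ×ˢ 𝓝 1) (𝓝 1) := tendsto_snd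
  have hx : Tendsto (fun a : ℝ × (Fin n → ℝ) => a.2 i + a.1) (atTop ×ˢ 𝓝 1) atTop :=
    (((continuous_apply i).tendsto _).comp hp).add_atTop tendsto_fst
  filter_upwards [eventually_sigmaNorm_update_pos hl hln hp hx i,
    eventually_sigmaNorm_update_pos hk hkn hp hx i,
    (tendsto_fquot_update hk hkn hl hln hp hx i).eventually_const_lt hclim] with a hσl hσk hf
  exact ⟨hσl, hσk, (add_sub_cancel 1 c).trans_le hf.le⟩
end

section
/- Let a ∈ (0,1) satisfy a² > 1/8. Then γ(y) = 2y³ − 2ay² − 2y + 3a > 0 for every y ∈ [a,1]; equivalently, the minimum value 7a/3 − (4/27)a³ − (4/27)(a²+3)^{3/2} of γ over [a,1] is strictly positive. -/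
open scoped BigOperators
open Set

/-! At a critical point `m` a cubic `f` has `f y - f m = (y - m) ^ 2 * ℓ y` with `ℓ` affine, so
`f m` is the minimum of `f` wherever `ℓ ≥ 0`. For `γ` and its larger critical point this region
contains `[0, ∞)`. The value there is positive because the product of the two critical values of `γ`
is `(8 * a ^ 2 - 1) * (16 - 3 * a ^ 2) / 27` and, for `a > 0`, the other critical value is
positive. -/

section Cubic

variable {R : Type*} [CommRing R] {p q r m : R}

theorem cubic_sub_cubic_of_deriv_eq_zero (s : R) (hm : 3 * p * m ^ 2 + 2 * q * m + r = 0) (y : R) :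
    (p * y ^ 3 + q * y ^ 2 + r * y + s) - (p * m ^ 3 + q * m ^ 2 + r * m + s) =
      (y - m) ^ 2 * (p * (y + 2 * m) + q) := by
  linear_combination (y - m) * hm

theorem isMinOn_cubic_of_deriv_eq_zero [LinearOrder R] [IsStrictOrderedRing R] (s : R)
    (hm : 3 * p * m ^ 2 + 2 * q * m + r = 0) :
    IsMinOn (fun y ↦ p * y ^ 3 + q * y ^ 2 + r * y + s) {y | 0 ≤ p * (y + 2 * m) + q} m := by
  intro y hy
  exact sub_nonneg.mp <|
    cubic_sub_cubic_of_deriv_eq_zero s hm y ▸ mul_nonneg (sq_nonneg (y - m)) hy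

end Cubic

/-- The cubic `γ` with parameter `a`. -/
def gammaCubic (a y : ℝ) : ℝ :=
  2 * y ^ 3 - 2 * a * y ^ 2 - 2 * y + 3 * a

/-- The larger critical point of `γ`, which lies in `[a, 1]` when `a ∈ [0, 1]`. -/
noncomputable def gammaArgmin (a : ℝ) : ℝ :=
  (a + √(a ^ 2 + 3)) / 3

/-- The minimum of `γ` over `[0, ∞)`, in closed form; it is attained at `gammaArgmin a`. -/
noncomputable def gammaMin (a : ℝ) : ℝ :=
  7 * a / 3 - (4 / 27) * a ^ 3 - (4 / 27) * (a ^ 2 + 3) ^ ((3 : ℝ) / 2)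

theorem sq_sqrt_sq_add_three (a : ℝ) : √(a ^ 2 + 3) ^ 2 = a ^ 2 + 3 :=
  Real.sq_sqrt (by positivity)

theorem abs_lt_sqrt_sq_add_three (a : ℝ) : |a| < √(a ^ 2 + 3) :=
  Real.lt_sqrt_of_sq_lt (by rw [sq_abs]; linarith)

theorem gammaMin_eq_sqrt_pow (a : ℝ) :
    gammaMin a = (63 * a - 4 * a ^ 3 - 4 * √(a ^ 2 + 3) ^ 3) / 27 := by
  rw [gammaMin, Real.rpow_div_two_eq_sqrt 3 (by positivity), Real.rpow_ofNat]
  ring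

theorem gammaCubic_gammaArgmin (a : ℝ) : gammaCubic a (gammaArgmin a) = gammaMin a := by
  rw [gammaMin_eq_sqrt_pow, gammaCubic, gammaArgmin]
  linear_combination (2 / 9 * √(a ^ 2 + 3)) * sq_sqrt_sq_add_three a

theorem isMinOn_gammaCubic_gammaArgmin (a : ℝ) :
    IsMinOn (gammaCubic a) (Ici 0) (gammaArgmin a) := by
  have hderiv : 3 * 2 * gammaArgmin a ^ 2 + 2 * (-2 * a) * gammaArgmin a + -2 = 0 := by
    rw [gammaArgmin]
    linear_combination (2 / 3) * sq_sqrt_sq_add_three a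
  have hmin := isMinOn_cubic_of_deriv_eq_zero (3 * a) hderiv
  have hcubic : gammaCubic a = fun y ↦ 2 * y ^ 3 + -2 * a * y ^ 2 + -2 * y + 3 * a := by
    funext y
    rw [gammaCubic]
    ring
  rw [hcubic]
  refine hmin.on_subset fun y hy ↦ ?_
  have hy : 0 ≤ y := hy
  have ha := abs_lt.mp (abs_lt_sqrt_sq_add_three a)
  simp only [mem_ofPred_eq, gammaArgmin]
  linarith

theorem gammaMin_le_gammaCubic (a : ℝ) {y : ℝ} (hy : 0 ≤ y) : gammaMin a ≤ gammaCubic a y :=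
  gammaCubic_gammaArgmin a ▸ isMinOn_gammaCubic_gammaArgmin a hy

theorem mul_criticalValues_gammaCubic (a : ℝ) :
    (63 * a - 4 * a ^ 3 - 4 * √(a ^ 2 + 3) ^ 3) * (63 * a - 4 * a ^ 3 + 4 * √(a ^ 2 + 3) ^ 3) =
      27 * ((8 * a ^ 2 - 1) * (16 - 3 * a ^ 2)) := by
  have hpow : (√(a ^ 2 + 3) ^ 3) ^ 2 = (a ^ 2 + 3) ^ 3 := by
    rw [pow_right_comm, sq_sqrt_sq_add_three]
  linear_combination -16 * hpow

theorem gammaMin_pos_iff {a : ℝ} (ha : 0 < a) :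
    0 < gammaMin a ↔ 0 < (8 * a ^ 2 - 1) * (16 - 3 * a ^ 2) := by
  have hcube : a ^ 3 < √(a ^ 2 + 3) ^ 3 :=
    pow_lt_pow_left₀ ((le_abs_self a).trans_lt (abs_lt_sqrt_sq_add_three a)) ha.le three_ne_zero
  have hmax : 0 < 63 * a - 4 * a ^ 3 + 4 * √(a ^ 2 + 3) ^ 3 := by linarith
  rw [gammaMin_eq_sqrt_pow, div_pos_iff_of_pos_right (by norm_num), ← mul_pos_iff_of_pos_right hmax,
    mul_criticalValues_gammaCubic, mul_pos_iff_of_pos_left (by norm_num)]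

theorem stmt_17_general {a : ℝ} (ha : 0 < a) (ha8 : 1 / 8 < a ^ 2) (ha16 : a ^ 2 < 16 / 3) :
    (∀ y ∈ Ici 0, 0 < gammaCubic a y) ∧ 0 < gammaMin a := by
  have hmin : 0 < gammaMin a :=
    (gammaMin_pos_iff ha).mpr (mul_pos (by linarith) (by linarith))
  exact ⟨fun y hy ↦ hmin.trans_le (gammaMin_le_gammaCubic a hy), hmin⟩

/-- if a² > 1/8 then γ(y) = 2y³ − 2ay² − 2y + 3a > 0 on [a,1], and the
minimum value of γ on [a,1] is strictly positive. -/
theorem stmt_17 (a : ℝ) (ha : a ∈ Set.Ioo (0:ℝ) 1) (ha8 : 1 / 8 < a ^ 2) :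
    (∀ y ∈ Set.Icc a 1, 0 < 2 * y ^ 3 - 2 * a * y ^ 2 - 2 * y + 3 * a) ∧
    0 < 7 * a / 3 - (4 / 27) * a ^ 3 - (4 / 27) * (a ^ 2 + 3) ^ ((3:ℝ) / 2) := by
  have ha16 : a ^ 2 < 16 / 3 := (pow_lt_one₀ ha.1.le ha.2 two_ne_zero).trans (by norm_num)
  obtain ⟨hpos, hmin⟩ := stmt_17_general ha.1 ha8 ha16
  exact ⟨fun y hy ↦ hpos y (ha.1.le.trans hy.1), hmin⟩
end
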